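/- Let κᵢ, θᵢ, σᵢ > 0 with νᵢ := 2κᵢθᵢ/σᵢ², βᵢ := εᵢ/σᵢ², αᵢ := γ/σᵢ² for i = 1,2, where ε₁, ε₂ ≥ 0 and γ ∈ ℝ, and let π(x₁,x₂) := π_{ν₁,θ₁}(x₁)·π_{ν₂,θ₂}(x₂). Define the drift A₁(x) := κ₁(1 + β₁x₂)(θ₁ − x₁) + κ₂α₂x₁(θ₂ − x₂), A₂(x) := κ₂(1 + β₂x₁)(θ₂ − x₂) + κ₁α₁x₂(θ₁ − x₁), and the diffusion matrix S(x) with entries S₁₁ = σ₁²x₁ + ε₁x₁x₂, S₁₂ = S₂₁ = γx₁x₂, S₂₂ = σ₂²x₂ + ε₂x₁x₂. Then for every x ∈ (0,∞)² and i = 1,2, Aᵢ(x) = (1/(2π(x)))·∑_{j=1}^2 ∂/∂xⱼ[ π(x)·S_{ij}(x) ]. Consequently, for every twice continuously differentiable f, the ADC generator L f := A₁·∂₁f + A₂·∂₂f + (1/2)(S₁₁·∂₁₁f + 2S₁₂·∂₁₂f + S₂₂·∂₂₂f) satisfies L f(x) = (1/2)·(1/π(x))·∇·( π(x)·S(x)·∇f(x)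 ) on (0,∞)². -/

import Mathlib

open Real MeasureTheory Set

/-- Gamma density with shape `ν` and rate `ν/θ`. -/
noncomputable def piDens (ν θ x : ℝ) : ℝ :=
  ((ν / θ) ^ ν / Real.Gamma ν) * x ^ (ν - 1) * Real.exp (-ν * x / θ)

/-- Partial derivative in the first variable. -/
noncomputable def d1 (f : ℝ × ℝ → ℝ) (p : ℝ × ℝ) : ℝ :=
  deriv (fun t => f (t, p.2)) p.1

/-- Partial derivative in the second variable. -/
noncomputable def d2 (f : ℝ × ℝ → ℝ) (p : ℝ × ℝ) : ℝ :=
  deriv (fun t => f (p.1, t)) p.2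

/-- Product of two Gamma densities. -/
noncomputable def pi2 (ν₁ θ₁ ν₂ θ₂ : ℝ) (p : ℝ × ℝ) : ℝ :=
  piDens ν₁ θ₁ p.1 * piDens ν₂ θ₂ p.2

/-- Entry `S₁₁` of the ADC diffusion matrix. -/
noncomputable def S11 (σ₁ ε₁ : ℝ) (p : ℝ × ℝ) : ℝ := σ₁ ^ 2 * p.1 + ε₁ * p.1 * p.2

/-- Off-diagonal entry `S₁₂ = S₂₁` of the ADC diffusion matrix. -/
noncomputable def S12 (γ : ℝ) (p : ℝ × ℝ) : ℝ := γ * p.1 * p.2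

/-- Entry `S₂₂` of the ADC diffusion matrix. -/
noncomputable def S22 (σ₂ ε₂ : ℝ) (p : ℝ × ℝ) : ℝ := σ₂ ^ 2 * p.2 + ε₂ * p.1 * p.2

/-- First component of the ADC drift. -/
noncomputable def A1 (κ₁ θ₁ σ₁ κ₂ θ₂ σ₂ ε₁ γ : ℝ) (p : ℝ × ℝ) : ℝ :=
  κ₁ * (1 + ε₁ / σ₁ ^ 2 * p.2) * (θ₁ - p.1)
    + κ₂ * (γ / σ₂ ^ 2) * p.1 * (θ₂ - p.2)

/-- Second component of the ADC drift. -/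
noncomputable def A2 (κ₁ θ₁ σ₁ κ₂ θ₂ σ₂ ε₂ γ : ℝ) (p : ℝ × ℝ) : ℝ :=
  κ₂ * (1 + ε₂ / σ₂ ^ 2 * p.1) * (θ₂ - p.2)
    + κ₁ * (γ / σ₁ ^ 2) * p.2 * (θ₁ - p.1)

/-- The generator of the ADC bivariate CIR-like model. -/
noncomputable def adcGen (κ₁ θ₁ σ₁ κ₂ θ₂ σ₂ ε₁ ε₂ γ : ℝ)
    (f : ℝ × ℝ → ℝ) (p : ℝ × ℝ) : ℝ :=
  A1 κ₁ θ₁ σ₁ κ₂ θ₂ σ₂ ε₁ γ p * d1 f p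
    + A2 κ₁ θ₁ σ₁ κ₂ θ₂ σ₂ ε₂ γ p * d2 f p
    + 1 / 2 * (S11 σ₁ ε₁ p * d1 (d1 f) p
        + 2 * S12 γ p * d1 (d2 f) p
        + S22 σ₂ ε₂ p * d2 (d2 f) p)

/-!
For a weight `w` and a symmetric matrix field `S` one has
`∇·(w S ∇f) = ∑ᵢ (∑ⱼ ∂ⱼ(w Sᵢⱼ)) ∂ᵢf + w ∑ᵢⱼ Sᵢⱼ ∂ᵢⱼf`, so a generator with diffusion matrix `S`
is in divergence form as soon as its drift is `Aᵢ = (1 / 2w) ∑ⱼ ∂ⱼ(w Sᵢⱼ)`.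

For the Gamma weight the drift condition reduces to the one-dimensional CIR identity
`1 + x ∂ₓ log π_{ν,θ}(x) = (2κ / σ²) (θ - x)`, valid when `ν = 2κθ / σ²`: since `x₁` divides `S₁₁`
and `x₂` divides `S₁₂`, the sum `(1 / π) ∑ⱼ ∂ⱼ(π S₁ⱼ)` equals
`(σ₁² + ε₁x₂) (1 + x₁ ∂₁ log π) + γ x₁ (1 + x₂ ∂₂ log π)`, and symmetrically in the second row.
-/

section PartialDerivatives

variable {𝕜 E : Type*} [NontriviallyNormedField 𝕜] [NormedAddCommGroup E] [NormedSpace 𝕜 E]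
  {F : 𝕜 × 𝕜 → E} {F' : 𝕜 × 𝕜 →L[𝕜] E} {f g : ℝ × ℝ → ℝ} {f' : ℝ × ℝ →L[ℝ] ℝ}

theorem hasDerivAt_fst_of_hasFDerivAt {p : 𝕜 × 𝕜} (hF : HasFDerivAt F F' p) :
    HasDerivAt (fun t => F (t, p.2)) (F' (1, 0)) p.1 :=
  hF.comp_hasDerivAt (f := fun t => (t, p.2)) p.1
    ((hasDerivAt_id p.1).prodMk (hasDerivAt_const p.1 p.2))

theorem hasDerivAt_snd_of_hasFDerivAt {p : 𝕜 × 𝕜} (hF : HasFDerivAt F F' p) :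
    HasDerivAt (fun t => F (p.1, t)) (F' (0, 1)) p.2 :=
  hF.comp_hasDerivAt (f := fun t => (p.1, t)) p.2
    ((hasDerivAt_const p.2 p.1).prodMk (hasDerivAt_id p.2))

variable {p : ℝ × ℝ}

theorem d1_eq_of_hasFDerivAt (hf : HasFDerivAt f f' p) :
    d1 f p = f' (1, 0) :=
  (hasDerivAt_fst_of_hasFDerivAt hf).deriv

theorem d2_eq_of_hasFDerivAt (hf : HasFDerivAt f f' p) :
    d2 f p = f' (0, 1) :=
  (hasDerivAt_snd_of_hasFDerivAt hf).deriv

theorem d1_add (hf : DifferentiableAt ℝ f p) (hg : DifferentiableAt ℝ g p) :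
    d1 (f + g) p = d1 f p + d1 g p := by
  rw [d1_eq_of_hasFDerivAt (hf.hasFDerivAt.add hg.hasFDerivAt),
    d1_eq_of_hasFDerivAt hf.hasFDerivAt, d1_eq_of_hasFDerivAt hg.hasFDerivAt]
  rfl

theorem d2_add (hf : DifferentiableAt ℝ f p) (hg : DifferentiableAt ℝ g p) :
    d2 (f + g) p = d2 f p + d2 g p := by
  rw [d2_eq_of_hasFDerivAt (hf.hasFDerivAt.add hg.hasFDerivAt),
    d2_eq_of_hasFDerivAt hf.hasFDerivAt, d2_eq_of_hasFDerivAt hg.hasFDerivAt]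
  rfl

theorem d1_mul (hf : DifferentiableAt ℝ f p) (hg : DifferentiableAt ℝ g p) :
    d1 (f * g) p = f p * d1 g p + g p * d1 f p := by
  rw [d1_eq_of_hasFDerivAt (hf.hasFDerivAt.mul hg.hasFDerivAt),
    d1_eq_of_hasFDerivAt hf.hasFDerivAt, d1_eq_of_hasFDerivAt hg.hasFDerivAt]
  rfl

theorem d2_mul (hf : DifferentiableAt ℝ f p) (hg : DifferentiableAt ℝ g p) :
    d2 (f * g) p = f p * d2 g p + g p * d2 f p := by
  rw [d2_eq_of_hasFDerivAt (hf.hasFDerivAt.mul hg.hasFDerivAt),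
    d2_eq_of_hasFDerivAt hf.hasFDerivAt, d2_eq_of_hasFDerivAt hg.hasFDerivAt]
  rfl

theorem d1_eventuallyEq_fderiv (hf : ContDiffAt ℝ 1 f p) :
    d1 f =ᶠ[nhds p] fun q => fderiv ℝ f q (1, 0) :=
  (hf.eventually (by simp)).mono fun _ hq =>
    d1_eq_of_hasFDerivAt (hq.differentiableAt one_ne_zero).hasFDerivAt

theorem d2_eventuallyEq_fderiv (hf : ContDiffAt ℝ 1 f p) :
    d2 f =ᶠ[nhds p] fun q => fderiv ℝ f q (0, 1) :=
  (hf.eventually (by simp)).mono fun _ hq =>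
    d2_eq_of_hasFDerivAt (hq.differentiableAt one_ne_zero).hasFDerivAt

theorem hasFDerivAt_fderiv_apply {V W : Type*} [NormedAddCommGroup V] [NormedSpace 𝕜 V]
    [NormedAddCommGroup W] [NormedSpace 𝕜 W] {h : V → W} {x : V} (hh : ContDiffAt 𝕜 2 h x)
    (v : V) :
    HasFDerivAt (fun y => fderiv 𝕜 h y v) ((fderiv 𝕜 (fderiv 𝕜 h) x).flip v) x := by
  have hd : DifferentiableAt 𝕜 (fderiv 𝕜 h) x :=
    (hh.fderiv_right (m := 1) one_add_one_eq_two.le).differentiableAt one_ne_zero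
  simpa using hd.hasFDerivAt.clm_apply (hasFDerivAt_const v x)

theorem hasFDerivAt_d1 (hf : ContDiffAt ℝ 2 f p) :
    HasFDerivAt (d1 f) ((fderiv ℝ (fderiv ℝ f) p).flip (1, 0)) p :=
  (hasFDerivAt_fderiv_apply hf (1, 0)).congr_of_eventuallyEq
    (d1_eventuallyEq_fderiv (hf.of_le one_le_two))

theorem hasFDerivAt_d2 (hf : ContDiffAt ℝ 2 f p) :
    HasFDerivAt (d2 f) ((fderiv ℝ (fderiv ℝ f) p).flip (0, 1)) p :=
  (hasFDerivAt_fderiv_apply hf (0, 1)).congr_of_eventuallyEq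
    (d2_eventuallyEq_fderiv (hf.of_le one_le_two))

theorem d2_d1_eq_d1_d2 (hf : ContDiffAt ℝ 2 f p) : d2 (d1 f) p = d1 (d2 f) p := by
  rw [d2_eq_of_hasFDerivAt (hasFDerivAt_d1 hf), d1_eq_of_hasFDerivAt (hasFDerivAt_d2 hf)]
  exact hf.isSymmSndFDerivAt (by simp) (0, 1) (1, 0)

end PartialDerivatives

section Divergence

/-- The divergence of the planar vector field `(u, v)`, given by its two components. -/
noncomputable def planarDiv (u v : ℝ × ℝ → ℝ) (p : ℝ × ℝ) : ℝ :=
  d1 u p + d2 v p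

variable {w f u v u' v' s₁₁ s₁₂ s₂₂ : ℝ × ℝ → ℝ} {p : ℝ × ℝ}

theorem planarDiv_add (hu : DifferentiableAt ℝ u p) (hv : DifferentiableAt ℝ v p)
    (hu' : DifferentiableAt ℝ u' p) (hv' : DifferentiableAt ℝ v' p) :
    planarDiv (u + u') (v + v') p = planarDiv u v p + planarDiv u' v' p := by
  simp only [planarDiv, d1_add hu hu', d2_add hv hv']
  ring

theorem planarDiv_mul (hw : DifferentiableAt ℝ w p) (hu : DifferentiableAt ℝ u p)
    (hv : DifferentiableAt ℝ v p) :
    planarDiv (w * u) (w * v) p = w p * planarDiv u v p + (u p * d1 w p + v p * d2 w p) := by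
  simp only [planarDiv, d1_mul hw hu, d2_mul hw hv]
  ring

theorem planarDiv_mul_gradient (hf : ContDiffAt ℝ 2 f p) (h₁₁ : DifferentiableAt ℝ s₁₁ p)
    (h₁₂ : DifferentiableAt ℝ s₁₂ p) (h₂₂ : DifferentiableAt ℝ s₂₂ p) :
    planarDiv (s₁₁ * d1 f + s₁₂ * d2 f) (s₁₂ * d1 f + s₂₂ * d2 f) p
      = planarDiv s₁₁ s₁₂ p * d1 f p + planarDiv s₁₂ s₂₂ p * d2 f p
        + (s₁₁ p * d1 (d1 f) p + 2 * s₁₂ p * d1 (d2 f) p + s₂₂ p * d2 (d2 f) p) := by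
  have h₁ : DifferentiableAt ℝ (d1 f) p := (hasFDerivAt_d1 hf).differentiableAt
  have h₂ : DifferentiableAt ℝ (d2 f) p := (hasFDerivAt_d2 hf).differentiableAt
  simp only [mul_comm _ (d1 f), mul_comm _ (d2 f)]
  rw [planarDiv_add (h₁.mul h₁₁) (h₁.mul h₁₂) (h₂.mul h₁₂) (h₂.mul h₂₂),
    planarDiv_mul h₁ h₁₁ h₁₂, planarDiv_mul h₂ h₁₂ h₂₂, d2_d1_eq_d1_d2 hf]
  ring

theorem generator_eq_planarDiv_of_drift_eq {a₁ a₂ : ℝ} (hf : ContDiffAt ℝ 2 f p)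
    (hw : DifferentiableAt ℝ w p) (hw₀ : w p ≠ 0) (h₁₁ : DifferentiableAt ℝ s₁₁ p)
    (h₁₂ : DifferentiableAt ℝ s₁₂ p) (h₂₂ : DifferentiableAt ℝ s₂₂ p)
    (ha₁ : a₁ = 1 / (2 * w p) * planarDiv (w * s₁₁) (w * s₁₂) p)
    (ha₂ : a₂ = 1 / (2 * w p) * planarDiv (w * s₁₂) (w * s₂₂) p) :
    a₁ * d1 f p + a₂ * d2 f p
        + 1 / 2 * (s₁₁ p * d1 (d1 f) p + 2 * s₁₂ p * d1 (d2 f) p + s₂₂ p * d2 (d2 f) p)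
      = 1 / 2 * (1 / w p)
        * planarDiv (w * (s₁₁ * d1 f + s₁₂ * d2 f)) (w * (s₁₂ * d1 f + s₂₂ * d2 f)) p := by
  simp only [mul_add w, ← mul_assoc w]
  rw [planarDiv_mul_gradient hf (hw.mul h₁₁) (hw.mul h₁₂) (hw.mul h₂₂), ha₁, ha₂]
  simp only [Pi.mul_apply]
  field_simp

end Divergence

section GammaWeight

variable {κ σ ν θ x ν₁ θ₁ ν₂ θ₂ : ℝ} {p : ℝ × ℝ}

/-- The logarithmic derivative of the Gamma density `piDens ν θ`. -/
noncomputable def gammaScore (ν θ x : ℝ) : ℝ :=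
  (ν - 1) / x - ν / θ

theorem piDens_pos (hν : 0 < ν) (hθ : 0 < θ) (hx : 0 < x) : 0 < piDens ν θ x := by
  have := Gamma_pos_of_pos hν
  unfold piDens
  positivity

theorem hasDerivAt_piDens (hx : x ≠ 0) :
    HasDerivAt (piDens ν θ) (piDens ν θ x * gammaScore ν θ x) x := by
  have hpow : HasDerivAt (fun y : ℝ => y ^ (ν - 1)) ((ν - 1) * x ^ (ν - 1 - 1)) x :=
    hasDerivAt_rpow_const (Or.inl hx)
  have hexp : HasDerivAt (fun y : ℝ => exp (-ν * y / θ)) (exp (-ν * x / θ) * (-ν * 1 / θ)) x :=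
    (((hasDerivAt_id x).const_mul (-ν)).div_const θ).exp
  refine ((hpow.const_mul ((ν / θ) ^ ν / Gamma ν)).mul hexp).congr_deriv ?_
  rw [rpow_sub_one hx (ν - 1), piDens, gammaScore]
  ring

theorem one_add_mul_gammaScore (hθ : θ ≠ 0) (hν : ν = 2 * κ * θ / σ ^ 2) (hx : x ≠ 0) :
    1 + x * gammaScore ν θ x = 2 * κ / σ ^ 2 * (θ - x) := by
  have hνθ : ν / θ = 2 * κ / σ ^ 2 := by
    rw [hν]
    field_simp
  calc 1 + x * gammaScore ν θ x = ν / θ * (θ - x) := by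
        unfold gammaScore
        field_simp
        ring
    _ = 2 * κ / σ ^ 2 * (θ - x) := by rw [hνθ]

theorem pi2_pos (hν₁ : 0 < ν₁) (hθ₁ : 0 < θ₁) (hν₂ : 0 < ν₂) (hθ₂ : 0 < θ₂)
    (hp₁ : 0 < p.1) (hp₂ : 0 < p.2) : 0 < pi2 ν₁ θ₁ ν₂ θ₂ p :=
  mul_pos (piDens_pos hν₁ hθ₁ hp₁) (piDens_pos hν₂ hθ₂ hp₂)

theorem differentiableAt_pi2 (hp₁ : p.1 ≠ 0) (hp₂ : p.2 ≠ 0) :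
    DifferentiableAt ℝ (pi2 ν₁ θ₁ ν₂ θ₂) p :=
  ((hasDerivAt_piDens hp₁).differentiableAt.comp p differentiableAt_fst).mul
    ((hasDerivAt_piDens hp₂).differentiableAt.comp p differentiableAt_snd)

theorem d1_pi2 (hp₁ : p.1 ≠ 0) :
    d1 (pi2 ν₁ θ₁ ν₂ θ₂) p = pi2 ν₁ θ₁ ν₂ θ₂ p * gammaScore ν₁ θ₁ p.1 :=
  ((hasDerivAt_piDens hp₁).mul_const (piDens ν₂ θ₂ p.2)).deriv.trans (mul_right_comm _ _ _)

theorem d2_pi2 (hp₂ : p.2 ≠ 0) :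
    d2 (pi2 ν₁ θ₁ ν₂ θ₂) p = pi2 ν₁ θ₁ ν₂ θ₂ p * gammaScore ν₂ θ₂ p.2 :=
  ((hasDerivAt_piDens hp₂).const_mul (piDens ν₁ θ₁ p.1)).deriv.trans (mul_assoc _ _ _).symm

theorem planarDiv_pi2_mul {u v : ℝ × ℝ → ℝ} (hp₁ : p.1 ≠ 0) (hp₂ : p.2 ≠ 0)
    (hu : DifferentiableAt ℝ u p) (hv : DifferentiableAt ℝ v p) :
    planarDiv (pi2 ν₁ θ₁ ν₂ θ₂ * u) (pi2 ν₁ θ₁ ν₂ θ₂ * v) p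
      = pi2 ν₁ θ₁ ν₂ θ₂ p
        * (planarDiv u v p + (u p * gammaScore ν₁ θ₁ p.1 + v p * gammaScore ν₂ θ₂ p.2)) := by
  rw [planarDiv_mul (differentiableAt_pi2 hp₁ hp₂) hu hv, d1_pi2 hp₁, d2_pi2 hp₂]
  ring

end GammaWeight

section DiffusionMatrix

variable (σ ε γ : ℝ) (p : ℝ × ℝ)

theorem differentiable_S11 : Differentiable ℝ (S11 σ ε) := by
  unfold S11
  fun_prop

theorem differentiable_S12 : Differentiable ℝ (S12 γ) := by
  unfold S12
  fun_prop

theorem differentiable_S22 : Differentiable ℝ (S22 σ ε) := by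
  unfold S22
  fun_prop

theorem planarDiv_S11_S12 : planarDiv (S11 σ ε) (S12 γ) p = σ ^ 2 + ε * p.2 + γ * p.1 := by
  have h₁ : HasDerivAt (fun t => S11 σ ε (t, p.2)) (σ ^ 2 * 1 + ε * 1 * p.2) p.1 :=
    ((hasDerivAt_id p.1).const_mul (σ ^ 2)).add (((hasDerivAt_id p.1).const_mul ε).mul_const p.2)
  have h₂ : HasDerivAt (fun t => S12 γ (p.1, t)) (γ * p.1 * 1) p.2 :=
    (hasDerivAt_id p.2).const_mul (γ * p.1)
  rw [planarDiv, d1, d2, h₁.deriv, h₂.deriv]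
  ring

theorem planarDiv_S12_S22 : planarDiv (S12 γ) (S22 σ ε) p = γ * p.2 + (σ ^ 2 + ε * p.1) := by
  have h₁ : HasDerivAt (fun t => S12 γ (t, p.2)) (γ * 1 * p.2) p.1 :=
    ((hasDerivAt_id p.1).const_mul γ).mul_const p.2
  have h₂ : HasDerivAt (fun t => S22 σ ε (p.1, t)) (σ ^ 2 * 1 + ε * p.1 * 1) p.2 :=
    ((hasDerivAt_id p.2).const_mul (σ ^ 2)).add ((hasDerivAt_id p.2).const_mul (ε * p.1))
  rw [planarDiv, d1, d2, h₁.deriv, h₂.deriv]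
  ring

end DiffusionMatrix

section Drift

variable {κ₁ κ₂ θ₁ θ₂ σ₁ σ₂ ν₁ ν₂ : ℝ} {p : ℝ × ℝ}

theorem planarDiv_pi2_mul_S11_S12 (hθ₁ : θ₁ ≠ 0) (hθ₂ : θ₂ ≠ 0) (hσ₁ : σ₁ ≠ 0)
    (hν₁ : ν₁ = 2 * κ₁ * θ₁ / σ₁ ^ 2) (hν₂ : ν₂ = 2 * κ₂ * θ₂ / σ₂ ^ 2)
    (hp₁ : p.1 ≠ 0) (hp₂ : p.2 ≠ 0) (ε₁ γ : ℝ) :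
    planarDiv (pi2 ν₁ θ₁ ν₂ θ₂ * S11 σ₁ ε₁) (pi2 ν₁ θ₁ ν₂ θ₂ * S12 γ) p
      = pi2 ν₁ θ₁ ν₂ θ₂ p * (2 * A1 κ₁ θ₁ σ₁ κ₂ θ₂ σ₂ ε₁ γ p) := by
  rw [planarDiv_pi2_mul hp₁ hp₂ (differentiable_S11 σ₁ ε₁ p) (differentiable_S12 γ p),
    planarDiv_S11_S12]
  congr 1
  calc _ = (σ₁ ^ 2 + ε₁ * p.2) * (1 + p.1 * gammaScore ν₁ θ₁ p.1)
          + γ * p.1 * (1 + p.2 * gammaScore ν₂ θ₂ p.2) := by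
        unfold S11 S12
        ring
    _ = (σ₁ ^ 2 + ε₁ * p.2) * (2 * κ₁ / σ₁ ^ 2 * (θ₁ - p.1))
          + γ * p.1 * (2 * κ₂ / σ₂ ^ 2 * (θ₂ - p.2)) := by
        rw [one_add_mul_gammaScore hθ₁ hν₁ hp₁, one_add_mul_gammaScore hθ₂ hν₂ hp₂]
    _ = 2 * A1 κ₁ θ₁ σ₁ κ₂ θ₂ σ₂ ε₁ γ p := by
        unfold A1
        field_simp

theorem planarDiv_pi2_mul_S12_S22 (hθ₁ : θ₁ ≠ 0) (hθ₂ : θ₂ ≠ 0) (hσ₂ : σ₂ ≠ 0)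
    (hν₁ : ν₁ = 2 * κ₁ * θ₁ / σ₁ ^ 2) (hν₂ : ν₂ = 2 * κ₂ * θ₂ / σ₂ ^ 2)
    (hp₁ : p.1 ≠ 0) (hp₂ : p.2 ≠ 0) (ε₂ γ : ℝ) :
    planarDiv (pi2 ν₁ θ₁ ν₂ θ₂ * S12 γ) (pi2 ν₁ θ₁ ν₂ θ₂ * S22 σ₂ ε₂) p
      = pi2 ν₁ θ₁ ν₂ θ₂ p * (2 * A2 κ₁ θ₁ σ₁ κ₂ θ₂ σ₂ ε₂ γ p) := by
  rw [planarDiv_pi2_mul hp₁ hp₂ (differentiable_S12 γ p) (differentiable_S22 σ₂ ε₂ p),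
    planarDiv_S12_S22]
  congr 1
  calc _ = γ * p.2 * (1 + p.1 * gammaScore ν₁ θ₁ p.1)
          + (σ₂ ^ 2 + ε₂ * p.1) * (1 + p.2 * gammaScore ν₂ θ₂ p.2) := by
        unfold S12 S22
        ring
    _ = γ * p.2 * (2 * κ₁ / σ₁ ^ 2 * (θ₁ - p.1))
          + (σ₂ ^ 2 + ε₂ * p.1) * (2 * κ₂ / σ₂ ^ 2 * (θ₂ - p.2)) := by
        rw [one_add_mul_gammaScore hθ₁ hν₁ hp₁, one_add_mul_gammaScore hθ₂ hν₂ hp₂]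
    _ = 2 * A2 κ₁ θ₁ σ₁ κ₂ θ₂ σ₂ ε₂ γ p := by
        unfold A2
        field_simp
        ring

end Drift

theorem adc_generator_divergence_form_general {κ₁ κ₂ θ₁ θ₂ σ₁ σ₂ ν₁ ν₂ : ℝ} (ε₁ ε₂ γ : ℝ)
    (hκ₁ : 0 < κ₁) (hκ₂ : 0 < κ₂) (hθ₁ : 0 < θ₁) (hθ₂ : 0 < θ₂)
    (hσ₁ : σ₁ ≠ 0) (hσ₂ : σ₂ ≠ 0)
    (hν₁ : ν₁ = 2 * κ₁ * θ₁ / σ₁ ^ 2) (hν₂ : ν₂ = 2 * κ₂ * θ₂ / σ₂ ^ 2)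
    {p : ℝ × ℝ} (hp₁ : 0 < p.1) (hp₂ : 0 < p.2) :
    (A1 κ₁ θ₁ σ₁ κ₂ θ₂ σ₂ ε₁ γ p
        = 1 / (2 * pi2 ν₁ θ₁ ν₂ θ₂ p)
          * planarDiv (pi2 ν₁ θ₁ ν₂ θ₂ * S11 σ₁ ε₁) (pi2 ν₁ θ₁ ν₂ θ₂ * S12 γ) p
      ∧ A2 κ₁ θ₁ σ₁ κ₂ θ₂ σ₂ ε₂ γ p
        = 1 / (2 * pi2 ν₁ θ₁ ν₂ θ₂ p)
          * planarDiv (pi2 ν₁ θ₁ ν₂ θ₂ * S12 γ) (pi2 ν₁ θ₁ ν₂ θ₂ * S22 σ₂ ε₂) p)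
    ∧ ∀ f : ℝ × ℝ → ℝ, ContDiffAt ℝ 2 f p →
        adcGen κ₁ θ₁ σ₁ κ₂ θ₂ σ₂ ε₁ ε₂ γ f p
          = 1 / 2 * (1 / pi2 ν₁ θ₁ ν₂ θ₂ p)
            * planarDiv (pi2 ν₁ θ₁ ν₂ θ₂ * (S11 σ₁ ε₁ * d1 f + S12 γ * d2 f))
                (pi2 ν₁ θ₁ ν₂ θ₂ * (S12 γ * d1 f + S22 σ₂ ε₂ * d2 f)) p := by
  have hν₁_pos : 0 < ν₁ := by rw [hν₁]; positivity
  have hν₂_pos : 0 < ν₂ := by rw [hν₂]; positivity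
  have hpi : pi2 ν₁ θ₁ ν₂ θ₂ p ≠ 0 := (pi2_pos hν₁_pos hθ₁ hν₂_pos hθ₂ hp₁ hp₂).ne'
  have hA₁ : A1 κ₁ θ₁ σ₁ κ₂ θ₂ σ₂ ε₁ γ p = 1 / (2 * pi2 ν₁ θ₁ ν₂ θ₂ p)
      * planarDiv (pi2 ν₁ θ₁ ν₂ θ₂ * S11 σ₁ ε₁) (pi2 ν₁ θ₁ ν₂ θ₂ * S12 γ) p := by
    rw [planarDiv_pi2_mul_S11_S12 hθ₁.ne' hθ₂.ne' hσ₁ hν₁ hν₂ hp₁.ne' hp₂.ne']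
    field_simp
  have hA₂ : A2 κ₁ θ₁ σ₁ κ₂ θ₂ σ₂ ε₂ γ p = 1 / (2 * pi2 ν₁ θ₁ ν₂ θ₂ p)
      * planarDiv (pi2 ν₁ θ₁ ν₂ θ₂ * S12 γ) (pi2 ν₁ θ₁ ν₂ θ₂ * S22 σ₂ ε₂) p := by
    rw [planarDiv_pi2_mul_S12_S22 hθ₁.ne' hθ₂.ne' hσ₂ hν₁ hν₂ hp₁.ne' hp₂.ne']
    field_simp
  exact ⟨⟨hA₁, hA₂⟩, fun f hf =>
    generator_eq_planarDiv_of_drift_eq hf (differentiableAt_pi2 hp₁.ne' hp₂.ne') hpi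
      (differentiable_S11 σ₁ ε₁ p) (differentiable_S12 γ p) (differentiable_S22 σ₂ ε₂ p) hA₁ hA₂⟩

theorem adc_generator_divergence_form
    (κ₁ κ₂ θ₁ θ₂ σ₁ σ₂ ν₁ ν₂ ε₁ ε₂ γ : ℝ)
    (hκ₁ : 0 < κ₁) (hκ₂ : 0 < κ₂) (hθ₁ : 0 < θ₁) (hθ₂ : 0 < θ₂)
    (hσ₁ : 0 < σ₁) (hσ₂ : 0 < σ₂)
    (hν₁ : ν₁ = 2 * κ₁ * θ₁ / σ₁ ^ 2) (hν₂ : ν₂ = 2 * κ₂ * θ₂ / σ₂ ^ 2)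
    (hε₁ : 0 ≤ ε₁) (hε₂ : 0 ≤ ε₂) :
    (∀ p : ℝ × ℝ, 0 < p.1 → 0 < p.2 →
      A1 κ₁ θ₁ σ₁ κ₂ θ₂ σ₂ ε₁ γ p
          = 1 / (2 * pi2 ν₁ θ₁ ν₂ θ₂ p)
            * (deriv (fun t => pi2 ν₁ θ₁ ν₂ θ₂ (t, p.2) * S11 σ₁ ε₁ (t, p.2)) p.1
              + deriv (fun t => pi2 ν₁ θ₁ ν₂ θ₂ (p.1, t) * S12 γ (p.1, t)) p.2)
        ∧ A2 κ₁ θ₁ σ₁ κ₂ θ₂ σ₂ ε₂ γ p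
          = 1 / (2 * pi2 ν₁ θ₁ ν₂ θ₂ p)
            * (deriv (fun t => pi2 ν₁ θ₁ ν₂ θ₂ (t, p.2) * S12 γ (t, p.2)) p.1
              + deriv (fun t => pi2 ν₁ θ₁ ν₂ θ₂ (p.1, t) * S22 σ₂ ε₂ (p.1, t)) p.2))
    ∧ (∀ f : ℝ × ℝ → ℝ, ContDiff ℝ 2 f →
        ∀ p : ℝ × ℝ, 0 < p.1 → 0 < p.2 →
        adcGen κ₁ θ₁ σ₁ κ₂ θ₂ σ₂ ε₁ ε₂ γ f p
          = 1 / 2 * (1 / pi2 ν₁ θ₁ ν₂ θ₂ p)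
            * (deriv (fun t => pi2 ν₁ θ₁ ν₂ θ₂ (t, p.2)
                  * (S11 σ₁ ε₁ (t, p.2) * d1 f (t, p.2)
                    + S12 γ (t, p.2) * d2 f (t, p.2))) p.1
              + deriv (fun t => pi2 ν₁ θ₁ ν₂ θ₂ (p.1, t)
                  * (S12 γ (p.1, t) * d1 f (p.1, t)
                    + S22 σ₂ ε₂ (p.1, t) * d2 f (p.1, t))) p.2)) := by
  have general {p : ℝ × ℝ} := adc_generator_divergence_form_general (p := p) ε₁ ε₂ γ
    hκ₁ hκ₂ hθ₁ hθ₂ hσ₁.ne' hσ₂.ne' hν₁ hν₂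
  exact ⟨fun _ hp₁ hp₂ => (general hp₁ hp₂).1,
    fun f hf _ hp₁ hp₂ => (general hp₁ hp₂).2 f hf.contDiffAt⟩
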